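/- Baker–Pixley Theorem. Let A be a finite set, let F be a set of operations on A, let C be the clone generated by F, and suppose C contains a (d+1)-ary near unanimity operation for some d ≥ 2. Then an operation f on A belongs to C if and only if f preserves every d-ary relation ρ ⊆ A^d that is preserved by every operation in F (equivalently, every subalgebra of the d-th power of the algebra (A;F) is closed under f). -/

import Mathlib

universe u

/-- The type of finitary operations (of positive arity `n + 1`) on `A`. -/
abbrev Ops (A : Type u) : Type u := Σ n : ℕ, (Fin (n + 1) → A) → A

/-- A set of finitary operations on `A` is a clone if it contains all projection
operations and is closed under composition. -/
def IsClone {A : Type u} (C : Set (Ops A)) : Prop :=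
  (∀ (n : ℕ) (i : Fin (n + 1)), (⟨n, fun x => x i⟩ : Ops A) ∈ C) ∧
  ∀ (n m : ℕ) (f : (Fin (n + 1) → A) → A) (g : Fin (n + 1) → (Fin (m + 1) → A) → A),
    (⟨n, f⟩ : Ops A) ∈ C → (∀ i, (⟨m, g i⟩ : Ops A) ∈ C) →
    (⟨m, fun x => f fun i => g i x⟩ : Ops A) ∈ C

/-- The clone generated by a set `F` of operations: the least clone containing `F`. -/
def cloneGen {A : Type u} (F : Set (Ops A)) : Set (Ops A) :=
  ⋂₀ {C : Set (Ops A) | IsClone C ∧ F ⊆ C}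

/-- The clone of all projection operations on `A`. -/
def projClone (A : Type u) : Set (Ops A) :=
  {f : Ops A | ∃ i : Fin (f.1 + 1), f.2 = fun x => x i}

/-- A clone `M` is maximal if it is a proper subclone of the clone of all operations
and the clone of all operations is the only clone properly containing it. -/
def IsMaximalClone {A : Type u} (M : Set (Ops A)) : Prop :=
  IsClone M ∧ M ≠ Set.univ ∧
    ∀ D : Set (Ops A), IsClone D → M ⊆ D → D = M ∨ D = Set.univ

/-- A clone `C` is minimal if the clone of projections is its unique proper subclone. -/
def IsMinimalClone {A : Type u} (C : Set (Ops A)) : Prop :=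
  IsClone C ∧ C ≠ projClone A ∧
    ∀ D : Set (Ops A), IsClone D → D ⊆ C → D = projClone A ∨ D = C

/-- An `n`-ary operation `f` preserves a `k`-ary relation `ρ` if applying `f`
coordinatewise to tuples from `ρ` always yields a tuple in `ρ`. -/
def Preserves {A : Type u} {n k : ℕ} (f : (Fin n → A) → A) (ρ : Set (Fin k → A)) : Prop :=
  ∀ t : Fin n → Fin k → A, (∀ i, t i ∈ ρ) → (fun j => f fun i => t i j) ∈ ρ

/-- `Pol ρ` is the clone of all operations preserving the relation `ρ`. -/
def Pol {A : Type u} {k : ℕ} (ρ : Set (Fin k → A)) : Set (Ops A) :=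
  {f : Ops A | Preserves f.2 ρ}

/-!
The value tuples of the members of a clone at `d` given points form an invariant relation. If `f`
preserves it, then applying `f` to the value tuples of the projections shows that some member of
the clone agrees with `f` at these points. Interpolants spread from `d` points to any finite set
`S` by induction on its size: delete each of `d + 1` distinct points of `S` in turn, interpolate `f`
on what remains, and combine the `d + 1` interpolants by the near unanimity operation. At each
point of `S` at most one of them is wrong, and it is outvoted.
-/

section NearUnanimity

variable {ι X B : Type*}

/-- Near unanimity operations, with an arbitrary index type `ι` of argument positions: a single
dissenting argument does not affect the value. -/
def IsNearUnanimity [DecidableEq ι] (u : (ι → B) → B) : Prop :=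
  ∀ (x y : B) (i : ι), u (Function.update (fun _ => x) i y) = x

/-- Local interpolation: some member of the family `H` agrees with `f` on `S`. -/
def InterpolatedOn (H : Set (X → B)) (f : X → B) (S : Set X) : Prop :=
  ∃ h ∈ H, Set.EqOn h f S

theorem InterpolatedOn.mono {H : Set (X → B)} {f : X → B} {S T : Set X}
    (hT : InterpolatedOn H f T) (hST : S ⊆ T) : InterpolatedOn H f S :=
  let ⟨h, hh, hf⟩ := hT
  ⟨h, hh, hf.mono hST⟩

theorem IsNearUnanimity.apply_eq_of_forall_ne [DecidableEq ι] {u : (ι → B) → B}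
    (hu : IsNearUnanimity u) {v : ι → B} {x : B} {i : ι} (hv : ∀ j, j ≠ i → v j = x) :
    u v = x := by
  have hupdate : v = Function.update (fun _ => x) i (v i) := Function.eq_update_iff.2 ⟨rfl, hv⟩
  rw [hupdate]
  exact hu x (v i) i

variable [DecidableEq ι] [Nonempty ι] {u : (ι → B) → B} {H : Set (X → B)} {f : X → B}

theorem IsNearUnanimity.interpolatedOn_of_diff_singleton (hu : IsNearUnanimity u)
    (hH : ∀ h : ι → X → B, (∀ i, h i ∈ H) → (fun x => u fun i => h i x) ∈ H)
    {S : Set X} (p : ι ↪ X) (hS : ∀ i, InterpolatedOn H f (S \ {p i})) :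
    InterpolatedOn H f S := by
  choose h hmem heq using hS
  refine ⟨fun x => u fun i => h i x, hH h hmem, fun x hx => ?_⟩
  obtain ⟨i, hi⟩ : ∃ i, ∀ j, j ≠ i → x ≠ p j := by
    by_cases hxp : x ∈ Set.range p
    · obtain ⟨i, rfl⟩ := hxp
      exact ⟨i, fun j hji => p.injective.ne hji.symm⟩
    · exact ⟨Classical.arbitrary ι, fun j _ hxj => hxp ⟨j, hxj.symm⟩⟩
  exact hu.apply_eq_of_forall_ne fun j hji => heq j ⟨hx, hi j hji⟩

theorem IsNearUnanimity.interpolatedOn_finset [Fintype ι] (hu : IsNearUnanimity u)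
    (hH : ∀ h : ι → X → B, (∀ i, h i ∈ H) → (fun x => u fun i => h i x) ∈ H)
    (hsmall : ∀ S : Finset X, S.card < Fintype.card ι → InterpolatedOn H f S) (S : Finset X) :
    InterpolatedOn H f S := by
  classical
  induction S using Finset.strongInduction with
  | H S ih =>
    rcases lt_or_ge S.card (Fintype.card ι) with hcard | hcard
    · exact hsmall S hcard
    · obtain ⟨p⟩ : Nonempty (ι ↪ S) :=
        Function.Embedding.nonempty_of_card_le (by rwa [Fintype.card_coe])
      refine hu.interpolatedOn_of_diff_singleton hH
        (p.trans (Function.Embedding.subtype _)) fun i => ?_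
      rw [← Finset.coe_erase]
      exact ih _ (Finset.erase_ssubset (p i).2)

end NearUnanimity

section Clone

variable {A : Type u} {C F : Set (Ops A)} {n k d : ℕ}

theorem isClone_cloneGen (F : Set (Ops A)) : IsClone (cloneGen F) :=
  ⟨fun n i _ hD => hD.1.1 n i,
    fun n m f g hf hg D hD => hD.1.2 n m f g (hf D hD) fun i => hg i D hD⟩

theorem isClone_pol (ρ : Set (Fin k → A)) : IsClone (Pol ρ) :=
  ⟨fun _ i _ ht => ht i, fun _ _ _ g hf hg t ht =>
    hf (fun i j => g i fun l => t l j) fun i => hg i t ht⟩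

theorem IsClone.cloneGen_subset_iff (hC : IsClone C) : cloneGen F ⊆ C ↔ F ⊆ C :=
  ⟨fun hFC _ hf => hFC fun _ hD => hD.2 hf, fun hFC _ hf => hf C ⟨hC, hFC⟩⟩

/-- The operations of arity `n + 1` in `C`; the shift matches the encoding of `Ops`. -/
def arityPart (C : Set (Ops A)) (n : ℕ) : Set ((Fin (n + 1) → A) → A) :=
  {f | (⟨n, f⟩ : Ops A) ∈ C}

/-- The local closure of `C`: the operations that agree on each finite set with a member of `C`
of the same arity. -/
def localClosure (C : Set (Ops A)) : Set (Ops A) :=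
  {f | ∀ S : Finset (Fin (f.1 + 1) → A), InterpolatedOn (arityPart C f.1) f.2 S}

/-- The `k`-ary relation formed by the values of the `(n + 1)`-ary members of `C` at the points
`p j`; for a clone `C` this is the subalgebra of the `k`-th power generated by the `n + 1`
tuples `fun j => p j i`. -/
def valueRelation (C : Set (Ops A)) (p : Fin k → Fin (n + 1) → A) : Set (Fin k → A) :=
  (fun h => h ∘ p) '' arityPart C n

theorem subset_localClosure (C : Set (Ops A)) : C ⊆ localClosure C :=
  fun f hf _ => ⟨f.2, hf, Set.eqOn_refl _ _⟩

theorem localClosure_eq_self [Finite A] (C : Set (Ops A)) : localClosure C = C := by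
  refine Set.Subset.antisymm ?_ (subset_localClosure C)
  rintro ⟨n, f⟩ hf
  have := Fintype.ofFinite (Fin (n + 1) → A)
  obtain ⟨h, hmem, heq⟩ := hf Finset.univ
  have hhf : h = f := funext fun x => heq (Finset.mem_coe.2 (Finset.mem_univ x))
  exact hhf ▸ hmem

theorem localClosure_subset_pol {ρ : Set (Fin k → A)} (hC : C ⊆ Pol ρ) :
    localClosure C ⊆ Pol ρ := by
  classical
  intro f hf t ht
  obtain ⟨h, hmem, heq⟩ := hf (Finset.univ.image fun j i => t i j)
  have hvalues : (fun j => h fun i => t i j) = fun j => f.2 fun i => t i j :=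
    funext fun j => heq (Finset.mem_coe.2 (Finset.mem_image_of_mem _ (Finset.mem_univ j)))
  exact hvalues ▸ hC hmem t ht

theorem IsClone.subset_pol_valueRelation (hC : IsClone C) (p : Fin k → Fin (n + 1) → A) :
    C ⊆ Pol (valueRelation C p) := by
  intro g hg t ht
  choose h hmem ht using ht
  refine ⟨fun x => g.2 fun i => h i x, hC.2 g.1 n g.2 h hg hmem, ?_⟩
  simp only [← ht, Function.comp_def]

theorem IsClone.interpolatedOn_range (hC : IsClone C) {f : (Fin (n + 1) → A) → A}
    (p : Fin k → Fin (n + 1) → A) (hf : Preserves f (valueRelation C p)) :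
    InterpolatedOn (arityPart C n) f (Set.range p) := by
  have hproj : ∀ i, (fun j => p j i) ∈ valueRelation C p :=
    fun i => ⟨fun x => x i, hC.1 n i, rfl⟩
  obtain ⟨h, hmem, heq⟩ := hf (fun i j => p j i) hproj
  exact ⟨h, hmem, Set.forall_mem_range.2 (congrFun heq)⟩

theorem IsClone.interpolatedOn_of_card_le (hC : IsClone C) {f : (Fin (n + 1) → A) → A}
    (hf : ∀ ρ : Set (Fin d → A), C ⊆ Pol ρ → Preserves f ρ)
    (S : Finset (Fin (n + 1) → A)) (hS : S.card ≤ d) :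
    InterpolatedOn (arityPart C n) f S := by
  rcases S.eq_empty_or_nonempty with rfl | hne
  · exact ⟨fun x => x 0, hC.1 n 0, by simp⟩
  · have := hne.to_subtype
    obtain ⟨e⟩ : Nonempty (S ↪ Fin d) :=
      Function.Embedding.nonempty_of_card_le (by simpa using hS)
    obtain ⟨p, hp⟩ : ∃ p : Fin d → S, Function.Surjective p :=
      ⟨_, Function.invFun_surjective e.injective⟩
    refine (hC.interpolatedOn_range (fun j => p j) (hf _ (hC.subset_pol_valueRelation _))).mono ?_
    intro x hx
    obtain ⟨j, hj⟩ := hp ⟨x, hx⟩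
    exact ⟨j, congrArg Subtype.val hj⟩

theorem IsClone.mem_localClosure_iff (hC : IsClone C) {u : (Fin (d + 1) → A) → A}
    (hu : (⟨d, u⟩ : Ops A) ∈ C) (hnu : IsNearUnanimity u) (f : Ops A) :
    f ∈ localClosure C ↔ ∀ ρ : Set (Fin d → A), C ⊆ Pol ρ → Preserves f.2 ρ := by
  refine ⟨fun hf ρ hρ => localClosure_subset_pol hρ hf, fun hf S => ?_⟩
  refine hnu.interpolatedOn_finset (fun h hh => hC.2 d f.1 u h hu hh) (fun T hT => ?_) S
  rw [Fintype.card_fin, Nat.lt_succ_iff] at hT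
  exact hC.interpolatedOn_of_card_le hf T hT

end Clone

theorem baker_pixley_general {A : Type u} (F : Set (Ops A)) (d : ℕ)
    (u : (Fin (d + 1) → A) → A) (hu : (⟨d, u⟩ : Ops A) ∈ cloneGen F)
    (hnu : IsNearUnanimity u) (f : Ops A) :
    f ∈ localClosure (cloneGen F) ↔
      ∀ ρ : Set (Fin d → A), (∀ g ∈ F, Preserves g.2 ρ) → Preserves f.2 ρ := by
  rw [(isClone_cloneGen F).mem_localClosure_iff hu hnu]
  exact forall_congr' fun ρ => imp_congr_left (isClone_pol ρ).cloneGen_subset_iff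

/-- **Baker–Pixley Theorem.**  Let `A` be a finite set, `F` a set of operations on `A`,
and suppose the clone generated by `F` contains a `(d+1)`-ary near unanimity operation
(`d ≥ 2`).  Then an operation `f` belongs to the clone generated by `F` if and only if
`f` preserves every `d`-ary relation on `A` preserved by all operations in `F`. -/
theorem baker_pixley {A : Type u} [Fintype A] (F : Set (Ops A)) (d : ℕ) (hd : 2 ≤ d)
    (u : (Fin (d + 1) → A) → A) (hu : (⟨d, u⟩ : Ops A) ∈ cloneGen F)
    (hnu : ∀ (x y : A) (i : Fin (d + 1)), u (Function.update (fun _ => x) i y) = x) :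
    ∀ f : Ops A, f ∈ cloneGen F ↔
      ∀ ρ : Set (Fin d → A), (∀ g ∈ F, Preserves g.2 ρ) → Preserves f.2 ρ := by
  intro f
  rw [← baker_pixley_general F d u hu hnu f, localClosure_eq_self]
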